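/- arXiv:0902.1358 — 5 statements merged into one kernel-verified Lean document; each statement's English description precedes it below -/
import Mathlib

section
/- For every element h of H(0), one has ψ₀(h) ∈ N(∞) × N(∞) if and only if h ∈ N(∞). Equivalently, the induced homomorphism ψ_∞ : H(∞) → Γ × Γ, where Γ = F/N(∞) and H(∞) is the image of H(0) in Γ, is injective. -/
/-- The four-letter alphabet `{a, b, c, d}`. -/
inductive L4 : Type
  | a | b | c | d
  deriving DecidableEq

/-- The free group `F = F(a, b, c, d)`. -/
abbrev F4 : Type := FreeGroup L4

def ga : F4 := FreeGroup.of L4.a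
def gb : F4 := FreeGroup.of L4.b
def gc : F4 := FreeGroup.of L4.c
def gd : F4 := FreeGroup.of L4.d

/-- The endomorphism `σ` of `F(a,b,c,d)`:
`σ(a) = aca`, `σ(b) = d`, `σ(c) = b`, `σ(d) = c`. -/
def sigma : F4 →* F4 :=
  FreeGroup.lift fun x => match x with
    | L4.a => ga * gc * ga
    | L4.b => gd
    | L4.c => gb
    | L4.d => gc

/-- A seven-letter alphabet corresponding to the free generators
`b, c, d, aba, aca, ada, a²` of the index-2 subgroup `H(0)` of `F`. -/
inductive E7 : Type
  | eb | ec | ed | eaba | eaca | eada | eaa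
  deriving DecidableEq

/-- The embedding of the free group on the seven generators into `F`, sending
the generators to `b, c, d, aba, aca, ada, a²`; its range is `H(0)`. -/
def iota : FreeGroup E7 →* F4 :=
  FreeGroup.lift fun x => match x with
    | E7.eb => gb
    | E7.ec => gc
    | E7.ed => gd
    | E7.eaba => ga * gb * ga
    | E7.eaca => ga * gc * ga
    | E7.eada => ga * gd * ga
    | E7.eaa => ga ^ 2

/-- The homomorphism `ψ₀ : H(0) → F × F` (written on the free generators of
`H(0)`): `ψ₀(b) = (a,c)`, `ψ₀(c) = (a,d)`, `ψ₀(d) = (1,b)`, `ψ₀(aba) = (c,a)`,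
`ψ₀(aca) = (d,a)`, `ψ₀(ada) = (b,1)`, `ψ₀(a²) = (1,1)`. -/
def psi : FreeGroup E7 →* F4 × F4 :=
  FreeGroup.lift fun x => match x with
    | E7.eb => (ga, gc)
    | E7.ec => (ga, gd)
    | E7.ed => (1, gb)
    | E7.eaba => (gc, ga)
    | E7.eaca => (gd, ga)
    | E7.eada => (gb, 1)
    | E7.eaa => (1, 1)

/-- The relator set `R(i)` of the presentation `Γ(i)`, `1 ≤ i < ∞`:
`R(1) = {a², b², c², d², bcd, (ad)⁴}` and, for `i ≥ 2`,
`R(i) = R(1) ∪ {σʲ((ad)⁴) : 1 ≤ j ≤ i−1} ∪ {σʲ((adacac)⁴) : 0 ≤ j ≤ i−2}`. -/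
def Rpres (i : ℕ) : Set F4 :=
  {ga ^ 2, gb ^ 2, gc ^ 2, gd ^ 2, gb * gc * gd, (ga * gd) ^ 4}
    ∪ {w | ∃ j : ℕ, 1 ≤ j ∧ j + 1 ≤ i ∧ w = (⇑sigma)^[j] ((ga * gd) ^ 4)}
    ∪ {w | ∃ j : ℕ, j + 2 ≤ i ∧ w = (⇑sigma)^[j] ((ga * gd * ga * gc * ga * gc) ^ 4)}

/-- The Lysenok relator set
`R(∞) = {a², b², c², d², bcd} ∪ {σⁱ((ad)⁴) : i ≥ 0} ∪ {σⁱ((adacac)⁴) : i ≥ 0}`. -/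
def Rinf : Set F4 :=
  {ga ^ 2, gb ^ 2, gc ^ 2, gd ^ 2, gb * gc * gd}
    ∪ {w | ∃ i : ℕ, w = (⇑sigma)^[i] ((ga * gd) ^ 4)}
    ∪ {w | ∃ i : ℕ, w = (⇑sigma)^[i] ((ga * gd * ga * gc * ga * gc) ^ 4)}

/-!
Write `S` for the endomorphism of `Γ` induced by `σ` and `T` for `S` followed by conjugation by `a`.
The wreath recursion `Φ`, which restricts to `ψ_∞` on `H(∞)`, respects the relations of `Γ` and
satisfies `Φ(S g) = (κ g, g)` and `Φ(T g) = (g, κ g)`, where `κ` maps `Γ` onto the dihedral group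
`⟨a, d⟩` of exponent `4` and kills the normal closure `B` of `b`. The relations `(ad)⁴` and
`(adacac)⁴` say that `T b = ada` commutes with `S b` and `S(dabad)`; it also commutes with `S a`,
hence with `S` of all four conjugates of `b` by `⟨a, d⟩`, which generate `B`. Since
`T a = S d` and `T d = S a`, it follows that `T(Γ)` normalises `S(B)`, and so `H(∞) = S(B) T(Γ)`. If
`Φ(S x · T g) = 1` with `x ∈ B`, then `(g, x · κ g) = 1`, whence `g = x = 1`.
-/

open PresentedGroup SemidirectProduct

section Involutions

variable {G : Type*} [Group G] {x y g : G}

theorem commute_of_mul_sq_eq_one (hx : x * x = 1) (hy : y * y = 1) (hxy : (x * y) ^ 2 = 1) :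
    Commute x y := by
  have hyx : y * x = (x * y)⁻¹ := by
    rw [mul_inv_rev, inv_eq_of_mul_eq_one_left hx, inv_eq_of_mul_eq_one_left hy]
  rw [commute_iff_eq, hyx]
  exact eq_inv_of_mul_eq_one_left (by rw [← sq, hxy])

theorem exists_eq_zpow_or_eq_mul_zpow_of_mem_closure_pair (hx : x * x = 1) (hy : y * y = 1)
    (hg : g ∈ Subgroup.closure {x, y}) :
    ∃ n : ℤ, g = (x * y) ^ n ∨ g = x * (x * y) ^ n := by
  have hxi : x⁻¹ = x := inv_eq_of_mul_eq_one_left hx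
  have hyi : y⁻¹ = y := inv_eq_of_mul_eq_one_left hy
  have mul_left : ∀ s ∈ ({x, y} : Set G), ∀ h, (∃ n : ℤ, h = (x * y) ^ n ∨ h = x * (x * y) ^ n) →
      ∃ n : ℤ, s * h = (x * y) ^ n ∨ s * h = x * (x * y) ^ n := by
    rintro s (rfl | rfl) h ⟨n, rfl | rfl⟩
    · exact ⟨n, .inr rfl⟩
    · exact ⟨n, .inl (by rw [← mul_assoc, hx, one_mul])⟩
    · exact ⟨1 + n, .inr (by rw [zpow_add, zpow_one, mul_assoc, ← mul_assoc x x, hx, one_mul])⟩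
    · exact ⟨-1 + n, .inl (by rw [zpow_add, zpow_neg_one, mul_inv_rev, hxi, hyi, mul_assoc])⟩
  induction hg using Subgroup.closure_induction_left with
  | one => exact ⟨0, .inl (zpow_zero _).symm⟩
  | mul_left s hs h _ ih => exact mul_left s hs h ih
  | inv_mul_cancel s hs h _ ih =>
    have hsi : s⁻¹ = s := by rcases hs with rfl | rfl <;> assumption
    exact hsi.symm ▸ mul_left s hs h ih

theorem pow_eq_one_of_mem_closure_pair {n : ℕ} (hn : Even n) (hx : x * x = 1) (hy : y * y = 1)
    (hxy : (x * y) ^ n = 1) (hg : g ∈ Subgroup.closure {x, y}) : g ^ n = 1 := by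
  obtain ⟨k, rfl | rfl⟩ := exists_eq_zpow_or_eq_mul_zpow_of_mem_closure_pair hx hy hg
  · rw [← zpow_natCast, zpow_comm, zpow_natCast, hxy, one_zpow]
  · have hxi : x⁻¹ = x := inv_eq_of_mul_eq_one_left hx
    have inverts_mul : x * (x * y) * x⁻¹ = (x * y)⁻¹ := by
      rw [mul_inv_rev, hxi, inv_eq_of_mul_eq_one_left hy, ← mul_assoc, hx, one_mul]
    have inverts : x * (x * y) ^ k * x⁻¹ = ((x * y) ^ k)⁻¹ := by
      rw [← conj_zpow, inverts_mul, inv_zpow]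
    have sq_eq_one : (x * (x * y) ^ k) ^ 2 = 1 := by
      rw [sq, ← mul_assoc, ← inv_mul_cancel ((x * y) ^ k), ← inverts, hxi]
    obtain ⟨m, rfl⟩ := even_iff_exists_two_mul.mp hn
    rw [pow_mul, sq_eq_one, one_pow]

end Involutions

section PresentedGroupLift

variable {α G : Type*} [Group G] {rels : Set (FreeGroup α)}

/-- The homomorphism out of a presented group induced by a homomorphism out of the free group that
kills the relators. -/
def presentedGroupLift (φ : FreeGroup α →* G) (hφ : ∀ r ∈ rels, φ r = 1) :
    PresentedGroup rels →* G :=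
  PresentedGroup.toGroup (f := FreeGroup.lift.symm φ) (by simpa using hφ)

@[simp]
theorem presentedGroupLift_mk (φ : FreeGroup α →* G) (hφ : ∀ r ∈ rels, φ r = 1)
    (w : FreeGroup α) : presentedGroupLift φ hφ (PresentedGroup.mk rels w) = φ w :=
  DFunLike.congr_fun (FreeGroup.lift.apply_symm_apply φ) w

end PresentedGroupLift

section Holomorph

variable {G : Type*} [Group G]

/-- The holomorph `G ⋊ Aut G`. For `G × G` it contains the wreath product `G ≀ C₂`, generated by
`G × G` and the automorphism exchanging the factors. -/
abbrev Holomorph (G : Type*) [Group G] : Type _ := G ⋊[MonoidHom.id (MulAut G)] MulAut G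

/-- The exchange of the two factors of `G × G`, as an element of the holomorph. -/
def factorSwap : Holomorph (G × G) := inr (MulEquiv.prodComm : MulAut (G × G))

theorem factorSwap_mul_self : (factorSwap : Holomorph (G × G)) * factorSwap = 1 := by
  rw [factorSwap, ← map_mul]
  exact map_one inr

theorem factorSwap_mul_inl_mul_factorSwap (p : G × G) :
    factorSwap * inl p * factorSwap = (inl p.swap : Holomorph (G × G)) :=
  (inl_aut _ p).symm

end Holomorph

section FreeGroupOnLetters

variable {G : Type*} [Group G]

theorem sigma_ga : sigma ga = ga * gc * ga := FreeGroup.lift_apply_of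
theorem sigma_gb : sigma gb = gd := FreeGroup.lift_apply_of
theorem sigma_gc : sigma gc = gb := FreeGroup.lift_apply_of
theorem sigma_gd : sigma gd = gc := FreeGroup.lift_apply_of

theorem F4_hom_ext {φ ψ : F4 →* G} (ha : φ ga = ψ ga) (hb : φ gb = ψ gb) (hc : φ gc = ψ gc)
    (hd : φ gd = ψ gd) : φ = ψ :=
  FreeGroup.ext_hom _ _ fun | .a => ha | .b => hb | .c => hc | .d => hd

/-- The homomorphism out of `F` with the given values at `a`, `b`, `c`, `d`. -/
def liftLetters (x y z w : G) : F4 →* G :=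
  FreeGroup.lift fun | .a => x | .b => y | .c => z | .d => w

@[simp]
theorem liftLetters_ga (x y z w : G) : liftLetters x y z w ga = x := FreeGroup.lift_apply_of
@[simp]
theorem liftLetters_gb (x y z w : G) : liftLetters x y z w gb = y := FreeGroup.lift_apply_of
@[simp]
theorem liftLetters_gc (x y z w : G) : liftLetters x y z w gc = z := FreeGroup.lift_apply_of
@[simp]
theorem liftLetters_gd (x y z w : G) : liftLetters x y z w gd = w := FreeGroup.lift_apply_of

theorem liftLetters_mem {H : Subgroup G} {x y z w : G} (hx : x ∈ H) (hy : y ∈ H) (hz : z ∈ H)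
    (hw : w ∈ H) (u : F4) : liftLetters x y z w u ∈ H :=
  FreeGroup.range_lift_le (Set.range_subset_iff.mpr fun | .a => hx | .b => hy | .c => hz | .d => hw)
    (MonoidHom.mem_range.mpr ⟨u, rfl⟩)

theorem map_eq_one_of_mem_Rinf {φ : F4 →* G} (ha : φ ga * φ ga = 1) (hb : φ gb * φ gb = 1)
    (hc : φ gc * φ gc = 1) (hd : φ gd * φ gd = 1) (hbcd : φ gb * φ gc * φ gd = 1)
    (had : ∀ i, φ (sigma^[i] (ga * gd)) ^ 4 = 1)
    (hadacac : ∀ i, φ (sigma^[i] (ga * gd * ga * gc * ga * gc)) ^ 4 = 1) :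
    ∀ r ∈ Rinf, φ r = 1 := by
  rintro r (((rfl | rfl | rfl | rfl | rfl) | ⟨i, rfl⟩) | ⟨i, rfl⟩)
  · rwa [sq, map_mul]
  · rwa [sq, map_mul]
  · rwa [sq, map_mul]
  · rwa [sq, map_mul]
  · rwa [map_mul, map_mul]
  · rw [iterate_map_pow, map_pow, had]
  · rw [iterate_map_pow, map_pow, hadacac]

end FreeGroupOnLetters

/-- The Grigorchuk group `Γ = F / N(∞)`. -/
abbrev GrigorchukGroup : Type := PresentedGroup Rinf

namespace GrigorchukGroup

/-- The image in `Γ` of the generator `a` of `F`. -/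
def a : GrigorchukGroup := mk Rinf ga
/-- The image in `Γ` of the generator `b` of `F`. -/
def b : GrigorchukGroup := mk Rinf gb
/-- The image in `Γ` of the generator `c` of `F`. -/
def c : GrigorchukGroup := mk Rinf gc
/-- The image in `Γ` of the generator `d` of `F`. -/
def d : GrigorchukGroup := mk Rinf gd

@[simp]
theorem mk_ga : mk Rinf ga = a := rfl
@[simp]
theorem mk_gb : mk Rinf gb = b := rfl
@[simp]
theorem mk_gc : mk Rinf gc = c := rfl
@[simp]
theorem mk_gd : mk Rinf gd = d := rfl

theorem a_mul_a : a * a = 1 := by rw [← sq]; exact one_of_mem (x := ga ^ 2) (by simp [Rinf])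
theorem b_mul_b : b * b = 1 := by rw [← sq]; exact one_of_mem (x := gb ^ 2) (by simp [Rinf])
theorem c_mul_c : c * c = 1 := by rw [← sq]; exact one_of_mem (x := gc ^ 2) (by simp [Rinf])
theorem d_mul_d : d * d = 1 := by rw [← sq]; exact one_of_mem (x := gd ^ 2) (by simp [Rinf])

theorem b_mul_c_mul_d : b * c * d = 1 := one_of_mem (x := gb * gc * gd) (by simp [Rinf])

theorem b_mul_d : b * d = c := by grind [b_mul_b, c_mul_c, d_mul_d, b_mul_c_mul_d]
theorem d_mul_b : d * b = c := by grind [b_mul_b, d_mul_d, b_mul_d, c_mul_c]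
theorem d_mul_c : d * c = b := by grind [d_mul_d, d_mul_b]
theorem c_mul_d : c * d = b := by grind [d_mul_d, b_mul_d]

theorem mk_iterate_sigma_ga_gd_pow (i : ℕ) : mk Rinf (sigma^[i] (ga * gd)) ^ 4 = 1 := by
  rw [← map_pow, ← iterate_map_pow]
  exact one_of_mem (.inl (.inr ⟨i, rfl⟩))

theorem mk_iterate_sigma_ga_gd_ga_gc_ga_gc_pow (i : ℕ) :
    mk Rinf (sigma^[i] (ga * gd * ga * gc * ga * gc)) ^ 4 = 1 := by
  rw [← map_pow, ← iterate_map_pow]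
  exact one_of_mem (.inr ⟨i, rfl⟩)

theorem a_mul_d_pow_four : (a * d) ^ 4 = 1 := mk_iterate_sigma_ga_gd_pow 0

theorem a_d_a_d_eq_d_a_d_a : a * d * a * d = d * a * d * a := by
  have expanded : a * d * a * d * (a * d * a * d) = 1 := by
    rw [← a_mul_d_pow_four]
    simp only [pow_succ, pow_zero, one_mul, mul_assoc]
  grind [a_mul_a, d_mul_d]

theorem a_d_a_c_a_c_pow_four : (a * d * a * c * a * c) ^ 4 = 1 :=
  mk_iterate_sigma_ga_gd_ga_gc_ga_gc_pow 0

theorem eq_top_of_mem {H : Subgroup GrigorchukGroup} (ha : a ∈ H) (hb : b ∈ H) (hd : d ∈ H) :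
    H = ⊤ := by
  have hc : c ∈ H := b_mul_d ▸ mul_mem hb hd
  exact (Subgroup.eq_top_iff' H).mpr
    (generated_by Rinf H fun | .a => ha | .b => hb | .c => hc | .d => hd)

/-- The endomorphism of `Γ` induced by `σ`. The wreath recursion sends `sigmaRight g` to a pair with
right coordinate `g`. -/
def sigmaRight : GrigorchukGroup →* GrigorchukGroup :=
  presentedGroupLift ((mk Rinf).comp sigma) <| by
    apply map_eq_one_of_mem_Rinf <;>
      simp only [MonoidHom.comp_apply, sigma_ga, sigma_gb, sigma_gc, sigma_gd, map_mul, mk_ga,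
        mk_gb, mk_gc, mk_gd]
    · grind [a_mul_a, c_mul_c]
    · exact d_mul_d
    · exact b_mul_b
    · exact c_mul_c
    · rw [d_mul_b, c_mul_c]
    · intro i
      rw [← Function.iterate_succ_apply' sigma]
      exact mk_iterate_sigma_ga_gd_pow (i + 1)
    · intro i
      rw [← Function.iterate_succ_apply' sigma]
      exact mk_iterate_sigma_ga_gd_ga_gc_ga_gc_pow (i + 1)

theorem sigmaRight_mk (w : F4) : sigmaRight (mk Rinf w) = mk Rinf (sigma w) :=
  presentedGroupLift_mk _ _ w

theorem sigmaRight_a : sigmaRight a = a * c * a := by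
  simp only [← mk_ga, sigmaRight_mk, sigma_ga, map_mul, mk_gc]
theorem sigmaRight_b : sigmaRight b = d := by
  rw [← mk_gb, sigmaRight_mk, sigma_gb, mk_gd]
theorem sigmaRight_c : sigmaRight c = b := by
  rw [← mk_gc, sigmaRight_mk, sigma_gc, mk_gb]
theorem sigmaRight_d : sigmaRight d = c := by
  rw [← mk_gd, sigmaRight_mk, sigma_gd, mk_gc]

/-- The endomorphism of `Γ` induced by `σ`, followed by conjugation by `a`. The wreath recursion
sends `sigmaLeft g` to a pair with left coordinate `g`. -/
def sigmaLeft : GrigorchukGroup →* GrigorchukGroup :=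
  (MulAut.conj a).toMonoidHom.comp sigmaRight

theorem sigmaLeft_apply (g : GrigorchukGroup) : sigmaLeft g = a * sigmaRight g * a :=
  congrArg (a * sigmaRight g * ·) (inv_eq_of_mul_eq_one_left a_mul_a)

theorem sigmaLeft_a : sigmaLeft a = c := by
  grind [sigmaLeft_apply a, sigmaRight_a, a_mul_a]
theorem sigmaLeft_b : sigmaLeft b = a * d * a := by rw [sigmaLeft_apply, sigmaRight_b]
theorem sigmaLeft_c : sigmaLeft c = a * b * a := by rw [sigmaLeft_apply, sigmaRight_c]
theorem sigmaLeft_d : sigmaLeft d = a * c * a := by rw [sigmaLeft_apply, sigmaRight_d]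

/-- The endomorphism `a ↦ d`, `b ↦ 1`, `c ↦ a`, `d ↦ a` of `Γ`, whose image is the dihedral group
`⟨a, d⟩`. -/
def dihedralMap : GrigorchukGroup →* GrigorchukGroup :=
  presentedGroupLift (liftLetters d 1 a a) <| by
    have fourth_pow (w : F4) : liftLetters d 1 a a w ^ 4 = 1 := by
      refine pow_eq_one_of_mem_closure_pair (by decide) a_mul_a d_mul_d a_mul_d_pow_four ?_
      have ha : a ∈ Subgroup.closure {a, d} := Subgroup.subset_closure (by simp)
      have hd : d ∈ Subgroup.closure {a, d} := Subgroup.subset_closure (by simp)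
      exact liftLetters_mem hd (one_mem _) ha ha w
    exact map_eq_one_of_mem_Rinf (by simpa using d_mul_d) (by simp) (by simpa using a_mul_a)
      (by simpa using a_mul_a) (by simpa using a_mul_a) (fun _ ↦ fourth_pow _)
      (fun _ ↦ fourth_pow _)

theorem dihedralMap_mk (w : F4) : dihedralMap (mk Rinf w) = liftLetters d 1 a a w :=
  presentedGroupLift_mk _ _ w

theorem dihedralMap_a : dihedralMap a = d := (dihedralMap_mk ga).trans (liftLetters_ga ..)
theorem dihedralMap_b : dihedralMap b = 1 := (dihedralMap_mk gb).trans (liftLetters_gb ..)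
theorem dihedralMap_c : dihedralMap c = a := (dihedralMap_mk gc).trans (liftLetters_gc ..)
theorem dihedralMap_d : dihedralMap d = a := (dihedralMap_mk gd).trans (liftLetters_gd ..)

/-- The wreath recursion `a ↦ swap`, `b ↦ (a, c)`, `c ↦ (a, d)`, `d ↦ (1, b)` on `F`. -/
def freeWreathRecursion : F4 →* Holomorph (GrigorchukGroup × GrigorchukGroup) :=
  liftLetters factorSwap (inl (a, c)) (inl (a, d)) (inl (1, b))

theorem freeWreathRecursion_sigma (w : F4) :
    freeWreathRecursion (sigma w) = inl (dihedralMap (mk Rinf w), mk Rinf w) := by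
  have comp_eq : freeWreathRecursion.comp sigma =
      inl.comp ((dihedralMap.comp (mk Rinf)).prod (mk Rinf)) := by
    apply F4_hom_ext <;>
      simp [freeWreathRecursion, sigma_ga, sigma_gb, sigma_gc, sigma_gd, dihedralMap_a,
        dihedralMap_b, dihedralMap_c, dihedralMap_d, factorSwap_mul_inl_mul_factorSwap]
  exact DFunLike.congr_fun comp_eq w

theorem freeWreathRecursion_a_d_sq : freeWreathRecursion (ga * gd) ^ 2 = inl (b, b) := by
  simp only [freeWreathRecursion, map_mul, liftLetters_ga, liftLetters_gd, sq, ← mul_assoc]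
  rw [factorSwap_mul_inl_mul_factorSwap, ← map_mul]
  simp

theorem freeWreathRecursion_a_d_a_c_a_c_sq :
    freeWreathRecursion (ga * gd * ga * gc * ga * gc) ^ 2 = inl (b, d * a * b * a * d) := by
  have regroup : (ga * gd * ga * gc * ga * gc) ^ 2 =
      (ga * gd * ga) * gc * (ga * gc * ga) * gd * (ga * gc * ga) * gc := by
    simp only [sq, mul_assoc]
  rw [← map_pow, regroup]
  simp only [freeWreathRecursion, map_mul, liftLetters_ga, liftLetters_gc, liftLetters_gd,
    factorSwap_mul_inl_mul_factorSwap, ← map_mul inl, Prod.swap, Prod.mk_mul_mk, inl_inj,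
    Prod.mk.injEq]
  grind [a_mul_a, d_mul_d]

/-- The wreath recursion `Γ → Γ ≀ C₂`, with values in the holomorph of `Γ × Γ`. -/
def wreathRecursion : GrigorchukGroup →* Holomorph (GrigorchukGroup × GrigorchukGroup) :=
  presentedGroupLift freeWreathRecursion <| by
    have sigma_pow (w : F4) (hw : mk Rinf w ^ 4 = 1) : freeWreathRecursion (sigma w) ^ 4 = 1 := by
      rw [freeWreathRecursion_sigma, ← map_pow, Prod.pow_mk, ← map_pow, hw, map_one]
      exact map_one inl
    apply map_eq_one_of_mem_Rinf
    · simp [freeWreathRecursion, factorSwap_mul_self]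
    · simp [freeWreathRecursion, ← map_mul, Prod.mk_one_one, a_mul_a, c_mul_c]
    · simp [freeWreathRecursion, ← map_mul, Prod.mk_one_one, a_mul_a, d_mul_d]
    · simp [freeWreathRecursion, ← map_mul, Prod.mk_one_one, b_mul_b]
    · simp [freeWreathRecursion, ← map_mul, Prod.mk_one_one, a_mul_a, c_mul_d, b_mul_b]
    · rintro (_ | i)
      · rw [Function.iterate_zero_apply, pow_mul _ 2 2, freeWreathRecursion_a_d_sq, ← map_pow]
        simp [sq, b_mul_b, Prod.mk_one_one]
      · rw [Function.iterate_succ_apply']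
        exact sigma_pow _ (mk_iterate_sigma_ga_gd_pow i)
    · rintro (_ | i)
      · have conj_b_sq : d * a * b * a * d * (d * a * b * a * d) = 1 := by
          grind [a_mul_a, b_mul_b, d_mul_d]
        rw [Function.iterate_zero_apply, pow_mul _ 2 2, freeWreathRecursion_a_d_a_c_a_c_sq,
          ← map_pow]
        simp [sq, b_mul_b, conj_b_sq, Prod.mk_one_one]
      · rw [Function.iterate_succ_apply']
        exact sigma_pow _ (mk_iterate_sigma_ga_gd_ga_gc_ga_gc_pow i)

theorem wreathRecursion_mk (w : F4) : wreathRecursion (mk Rinf w) = freeWreathRecursion w :=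
  presentedGroupLift_mk _ _ w

theorem wreathRecursion_sigmaRight (g : GrigorchukGroup) :
    wreathRecursion (sigmaRight g) = inl (dihedralMap g, g) := by
  obtain ⟨w, rfl⟩ := mk_surjective Rinf g
  rw [sigmaRight_mk, wreathRecursion_mk, freeWreathRecursion_sigma]

theorem wreathRecursion_sigmaLeft (g : GrigorchukGroup) :
    wreathRecursion (sigmaLeft g) = inl (g, dihedralMap g) := by
  have map_a : wreathRecursion a = factorSwap := by
    rw [a, wreathRecursion_mk, freeWreathRecursion, liftLetters_ga]
  rw [sigmaLeft_apply, map_mul, map_mul, wreathRecursion_sigmaRight, map_a,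
    factorSwap_mul_inl_mul_factorSwap, Prod.swap_prod_mk]

theorem wreathRecursion_mk_iota (e : FreeGroup E7) :
    wreathRecursion (mk Rinf (iota e)) = inl (mk Rinf (psi e).1, mk Rinf (psi e).2) := by
  have comp_eq : freeWreathRecursion.comp iota =
      inl.comp (((mk Rinf).prodMap (mk Rinf)).comp psi) := by
    apply FreeGroup.ext_hom
    rintro (_ | _ | _ | _ | _ | _ | _) <;>
      simp [iota, psi, freeWreathRecursion, factorSwap_mul_inl_mul_factorSwap, sq,
        factorSwap_mul_self, Prod.map, Prod.mk_one_one]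
  rw [wreathRecursion_mk]
  exact DFunLike.congr_fun comp_eq e

/-- The normal subgroup `B` of `Γ` generated by `b`. -/
abbrev normalClosureB : Subgroup GrigorchukGroup := Subgroup.normalClosure {b}

theorem normalClosureB_le_ker_dihedralMap : normalClosureB ≤ dihedralMap.ker :=
  Subgroup.normalClosure_le_normal (Set.singleton_subset_iff.mpr dihedralMap_b)

/-- The conjugates of `b` by the elements of `⟨a, d⟩`. -/
def dihedralConjugates : Set GrigorchukGroup :=
  {b, a * b * a, d * a * b * a * d, a * d * a * b * a * d * a}

theorem a_mem_normalizer_dihedralConjugates : a ∈ Subgroup.normalizer dihedralConjugates := by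
  have : Finite dihedralConjugates := by unfold dihedralConjugates; infer_instance
  refine Subgroup.mem_normalizer_fintype ?_
  rw [inv_eq_of_mul_eq_one_left a_mul_a]
  rintro x (rfl | rfl | rfl | rfl)
  · exact .inr (.inl rfl)
  · exact .inl (by grind [a_mul_a])
  · exact .inr (.inr (.inr (by grind [a_mul_a])))
  · exact .inr (.inr (.inl (by grind [a_mul_a])))

theorem d_mem_normalizer_dihedralConjugates : d ∈ Subgroup.normalizer dihedralConjugates := by
  have : Finite dihedralConjugates := by unfold dihedralConjugates; infer_instance
  refine Subgroup.mem_normalizer_fintype ?_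
  rw [inv_eq_of_mul_eq_one_left d_mul_d]
  rintro x (rfl | rfl | rfl | rfl)
  · exact .inl (by rw [d_mul_b, c_mul_d])
  · exact .inr (.inr (.inl (by grind)))
  · exact .inr (.inl (by grind [d_mul_d]))
  · refine .inr (.inr (.inr ?_))
    calc d * (a * d * a * b * a * d * a) * d
        = (d * a * d * a) * b * (a * d * a * d) := by simp only [mul_assoc]
      _ = (a * d * a * d) * b * (d * a * d * a) := by rw [a_d_a_d_eq_d_a_d_a]
      _ = a * d * a * (d * b * d) * a * d * a := by simp only [mul_assoc]
      _ = a * d * a * b * a * d * a := by rw [d_mul_b, c_mul_d]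

instance normal_closure_dihedralConjugates : (Subgroup.closure dihedralConjugates).Normal := by
  have hb : b ∈ Subgroup.closure dihedralConjugates := Subgroup.subset_closure (.inl rfl)
  have set_le := Subgroup.normalizer_le_normalizer_closure dihedralConjugates
  rw [← Subgroup.normalizer_eq_top_iff]
  exact eq_top_of_mem (set_le a_mem_normalizer_dihedralConjugates) (Subgroup.le_normalizer hb)
    (set_le d_mem_normalizer_dihedralConjugates)

theorem normalClosureB_le_closure_dihedralConjugates :
    normalClosureB ≤ Subgroup.closure dihedralConjugates :=
  Subgroup.normalClosure_le_normal
    (Set.singleton_subset_iff.mpr (Subgroup.subset_closure (.inl rfl)))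

theorem commute_d_sigmaLeft_b : Commute d (sigmaLeft b) := by
  rw [sigmaLeft_b, commute_iff_eq, a_d_a_d_eq_d_a_d_a]
  simp only [mul_assoc]

theorem commute_conj_d_sigmaLeft_b :
    Commute (c * (a * c * a) * d * (a * c * a) * c) (sigmaLeft b) := by
  rw [sigmaLeft_b]
  refine .symm (commute_of_mul_sq_eq_one ?_ ?_ ?_)
  · grind [a_mul_a, d_mul_d]
  · grind [a_mul_a, c_mul_c, d_mul_d]
  · rw [← a_d_a_c_a_c_pow_four]
    simp only [pow_succ, pow_zero, one_mul, mul_assoc]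

theorem commute_a_c_a_sigmaLeft_b : Commute (a * c * a) (sigmaLeft b) := by
  rw [sigmaLeft_b, commute_iff_eq]
  grind [a_mul_a, c_mul_d, d_mul_c]

theorem commute_sigmaRight_sigmaLeft_b {x : GrigorchukGroup} (hx : x ∈ normalClosureB) :
    Commute (sigmaRight x) (sigmaLeft b) := by
  let C := (Subgroup.centralizer {sigmaLeft b}).comap sigmaRight
  have mem_C {y} : y ∈ C ↔ Commute (sigmaRight y) (sigmaLeft b) := by
    rw [Subgroup.mem_comap, Subgroup.mem_centralizer_singleton_iff]
    rfl
  have ha : a ∈ C := by rw [mem_C, sigmaRight_a]; exact commute_a_c_a_sigmaLeft_b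
  have hb : b ∈ C := by rw [mem_C, sigmaRight_b]; exact commute_d_sigmaLeft_b
  have hdabad : d * a * b * a * d ∈ C := by
    rw [mem_C]
    simpa only [map_mul, sigmaRight_a, sigmaRight_b, sigmaRight_d] using commute_conj_d_sigmaLeft_b
  have conjugates_subset : dihedralConjugates ⊆ C := by
    rintro y (rfl | rfl | rfl | rfl)
    · exact hb
    · exact mul_mem (mul_mem ha hb) ha
    · exact hdabad
    · simpa only [mul_assoc, SetLike.mem_coe] using mul_mem (mul_mem ha hdabad) ha
  have normalClosureB_le : normalClosureB ≤ C :=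
    normalClosureB_le_closure_dihedralConjugates.trans
      ((Subgroup.closure_le C).mpr conjugates_subset)
  exact mem_C.mp (normalClosureB_le hx)

theorem range_sigmaLeft_le_normalizer :
    sigmaLeft.range ≤ Subgroup.normalizer (normalClosureB.map sigmaRight) := by
  have sigmaRight_mem (g) : sigmaRight g ∈ Subgroup.normalizer (normalClosureB.map sigmaRight) :=
    Subgroup.le_normalizer_map sigmaRight ⟨g, by simp [Subgroup.normalizer_eq_top], rfl⟩
  rw [MonoidHom.range_eq_map, Subgroup.map_le_iff_le_comap, top_le_iff]
  apply eq_top_of_mem <;> rw [Subgroup.mem_comap]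
  · rw [sigmaLeft_a, ← sigmaRight_d]
    exact sigmaRight_mem d
  · refine Subgroup.centralizer_le_normalizer _ (Subgroup.mem_centralizer_iff.mpr ?_)
    rintro _ ⟨x, hx, rfl⟩
    exact commute_sigmaRight_sigmaLeft_b hx
  · rw [sigmaLeft_d, ← sigmaRight_a]
    exact sigmaRight_mem a

/-- The subgroup `H(∞)` of `Γ`, the image of `H(0)`. -/
def evenSubgroup : Subgroup GrigorchukGroup := ((mk Rinf).comp iota).range

theorem evenSubgroup_le_sup : evenSubgroup ≤ normalClosureB.map sigmaRight ⊔ sigmaLeft.range := by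
  have left_mem (g) : sigmaLeft g ∈ normalClosureB.map sigmaRight ⊔ sigmaLeft.range :=
    Subgroup.mem_sup_right ⟨g, rfl⟩
  have hd : d ∈ normalClosureB.map sigmaRight ⊔ sigmaLeft.range :=
    Subgroup.mem_sup_left ⟨b, Subgroup.subset_normalClosure rfl, sigmaRight_b⟩
  have hc : c ∈ normalClosureB.map sigmaRight ⊔ sigmaLeft.range := sigmaLeft_a ▸ left_mem a
  rw [evenSubgroup, MonoidHom.range_eq_map, Subgroup.map_le_iff_le_comap,
    ← FreeGroup.closure_range_of, Subgroup.closure_le]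
  rintro _ ⟨_ | _ | _ | _ | _ | _ | _, rfl⟩ <;>
    simp only [iota, Subgroup.coe_comap, MonoidHom.coe_comp, Set.mem_preimage, Function.comp_apply,
      FreeGroup.lift_apply_of, SetLike.mem_coe, map_mul, map_pow, mk_ga, mk_gb, mk_gc, mk_gd]
  · exact d_mul_c ▸ mul_mem hd hc
  · exact hc
  · exact hd
  · exact sigmaLeft_c ▸ left_mem c
  · exact sigmaLeft_d ▸ left_mem d
  · exact sigmaLeft_b ▸ left_mem b
  · rw [sq, a_mul_a]
    exact one_mem _

theorem exists_eq_sigmaRight_mul_sigmaLeft {h : GrigorchukGroup} (hh : h ∈ evenSubgroup) :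
    ∃ x ∈ normalClosureB, ∃ g, h = sigmaRight x * sigmaLeft g := by
  have sup_eq_mul :=
    Subgroup.coe_mul_of_right_le_normalizer_left _ _ range_sigmaLeft_le_normalizer
  obtain ⟨_, ⟨x, hx, rfl⟩, _, ⟨g, rfl⟩, rfl⟩ := sup_eq_mul.subset (evenSubgroup_le_sup hh)
  exact ⟨x, hx, g, rfl⟩

theorem eq_one_of_wreathRecursion_eq_one {h : GrigorchukGroup} (hh : h ∈ evenSubgroup)
    (h_one : wreathRecursion h = 1) : h = 1 := by
  obtain ⟨x, hx, g, rfl⟩ := exists_eq_sigmaRight_mul_sigmaLeft hh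
  have hx_dihedral : dihedralMap x = 1 := normalClosureB_le_ker_dihedralMap hx
  have coords : (g, x * dihedralMap g) = (1 : GrigorchukGroup × GrigorchukGroup) := by
    rw [← inl_inj (φ := MonoidHom.id (MulAut (GrigorchukGroup × GrigorchukGroup))), map_one,
      ← h_one, map_mul, wreathRecursion_sigmaRight,
      wreathRecursion_sigmaLeft, ← map_mul, Prod.mk_mul_mk, hx_dihedral, one_mul]
  obtain ⟨rfl, hx_one⟩ := Prod.mk.inj coords
  rw [map_one, mul_one] at hx_one
  simp [hx_one]

end GrigorchukGroup

open GrigorchukGroup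

/-- for `h ∈ H(0)`, `ψ₀(h) ∈ N(∞) × N(∞)` if and only if
`h ∈ N(∞)`; i.e. the induced map `ψ_∞ : H(∞) → Γ × Γ` is injective. -/
theorem ker_psi_infty :
    ∀ e : FreeGroup E7,
      psi e ∈ (Subgroup.normalClosure Rinf).prod (Subgroup.normalClosure Rinf) ↔
        iota e ∈ Subgroup.normalClosure Rinf := by
  intro e
  have he : mk Rinf (iota e) ∈ evenSubgroup := ⟨e, rfl⟩
  have wreath_iff : wreathRecursion (mk Rinf (iota e)) = 1 ↔ mk Rinf (iota e) = 1 :=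
    ⟨eq_one_of_wreathRecursion_eq_one he, fun h ↦ by rw [h, map_one]⟩
  rw [Subgroup.mem_prod, ← mk_eq_one_iff, ← mk_eq_one_iff, ← mk_eq_one_iff, ← wreath_iff,
    wreathRecursion_mk_iota, ← map_one inl, inl_inj, Prod.mk_eq_one]
end

section
/- For every element W of the free group F with basis {a, b, c, d}, there exist elements U and Z of F such that: U is represented by a positive word (a product of the letters a, b, c, d with no inverses) of length at most |W|, no cyclic permutation of which contains a subword equal to aa or equal to g₁g₂ with g₁, g₂ ∈ {b, c, d}; and W·(Z U Z⁻¹)⁻¹ can be written as a product of at most 3·|W| conjugates of elements of {a², b², c², d², bcd} and their inverses. -/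
/-- `W` is a product of `L` conjugates of elements of `R ∪ R⁻¹`. -/
def IsProdConjPM {G : Type*} [Group G] (R : Set G) (L : ℕ) (W : G) : Prop :=
  ∃ f : Fin L → G,
    (∀ j, ∃ x r, r ∈ R ∧ (f j = x * r * x⁻¹ ∨ f j = x * r⁻¹ * x⁻¹)) ∧
    W = (List.ofFn f).prod

/-!
A letter and its inverse differ by a conjugate of a square, so signs can be changed at will, one
relator per letter. We keep the signs until the end. As long as two cyclically adjacent letters
form a forbidden pair, move them next to each other by a conjugation and replace them by at most
one letter: equal letters cancel, and distinct letters of `{b, c, d}` give the third one through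
`bcd`, after adjusting the two signs. Each replacement costs at most three relators and removes at
least one letter; when none is possible, making the remaining letters positive costs one relator
each. Every letter of the original word thus pays for at most three relators.
-/

lemma reverse_ofFn {α : Type*} {n : ℕ} (u : Fin n → α) :
    (List.ofFn u).reverse = List.ofFn (u ∘ Fin.rev) := by
  refine List.ext_getElem (by simp) fun i _ _ => ?_
  simp only [List.getElem_reverse, List.getElem_ofFn, List.length_ofFn, Function.comp_apply]
  congr 1
  ext
  simp only [Fin.val_rev]
  lia

namespace IsProdConjPM

variable {G : Type*} [Group G] {R : Set G} {m n : ℕ} {g h r : G}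

lemma one : IsProdConjPM R 0 1 :=
  ⟨Fin.elim0, fun j => j.elim0, by simp⟩

lemma of_mem (hr : r ∈ R) : IsProdConjPM R 1 r :=
  ⟨fun _ => r, fun _ => ⟨1, r, hr, Or.inl (by simp)⟩, by simp⟩

lemma mul (hg : IsProdConjPM R m g) (hh : IsProdConjPM R n h) :
    IsProdConjPM R (m + n) (g * h) := by
  obtain ⟨u, hu, rfl⟩ := hg
  obtain ⟨v, hv, rfl⟩ := hh
  refine ⟨Fin.append u v, Fin.addCases (fun i => ?left) (fun i => ?right), ?prod⟩
  case left => simpa only [Fin.append_left] using hu i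
  case right => simpa only [Fin.append_right] using hv i
  case prod => rw [List.ofFn_fin_append, List.prod_append]

lemma conj (x : G) (hg : IsProdConjPM R n g) : IsProdConjPM R n (x * g * x⁻¹) := by
  obtain ⟨u, hu, rfl⟩ := hg
  refine ⟨MulAut.conj x ∘ u, fun j => ?_, ?_⟩
  · obtain ⟨y, r, hr, hj⟩ := hu j
    refine ⟨x * y, r, hr, hj.imp (fun hj => ?_) (fun hj => ?_)⟩ <;>
      simp [hj, mul_assoc]
  · simpa only [MulAut.conj_apply, List.map_ofFn] using map_list_prod (MulAut.conj x) (List.ofFn u)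

lemma inv (hg : IsProdConjPM R n g) : IsProdConjPM R n g⁻¹ := by
  obtain ⟨u, hu, rfl⟩ := hg
  refine ⟨fun j => (u j.rev)⁻¹, fun j => ?_, ?_⟩
  · obtain ⟨y, r, hr, hj⟩ := hu j.rev
    refine ⟨y, r, hr, hj.symm.imp (fun hj => ?_) (fun hj => ?_)⟩ <;>
      simp [hj, mul_assoc]
  · rw [List.prod_inv_reverse, List.map_ofFn, reverse_ofFn]
    rfl

end IsProdConjPM

/-- `g` can be turned into `h` by at most `n` applications of the relators `R`: the quotient
`g * h⁻¹` is a product of at most `n` conjugates of elements of `R` and their inverses. -/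
def ConvertibleIn {G : Type*} [Group G] (R : Set G) (n : ℕ) (g h : G) : Prop :=
  ∃ L : ℕ, L ≤ n ∧ IsProdConjPM R L (g * h⁻¹)

namespace ConvertibleIn

variable {G : Type*} [Group G] {R : Set G} {m n : ℕ} {g g' h h' k u v w : G}

lemma refl (g : G) : ConvertibleIn R 0 g g :=
  ⟨0, le_rfl, by simpa only [mul_inv_cancel] using IsProdConjPM.one⟩

lemma mono (hgh : ConvertibleIn R m g h) (hmn : m ≤ n) : ConvertibleIn R n g h := by
  obtain ⟨L, hL, hprod⟩ := hgh
  exact ⟨L, hL.trans hmn, hprod⟩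

lemma symm (hgh : ConvertibleIn R n g h) : ConvertibleIn R n h g := by
  obtain ⟨L, hL, hprod⟩ := hgh
  exact ⟨L, hL, by simpa only [mul_inv_rev, inv_inv] using hprod.inv⟩

lemma trans (hgh : ConvertibleIn R m g h) (hhk : ConvertibleIn R n h k) :
    ConvertibleIn R (m + n) g k := by
  obtain ⟨L, hL, hprod⟩ := hgh
  obtain ⟨M, hM, hprod'⟩ := hhk
  exact ⟨L + M, Nat.add_le_add hL hM, by simpa [mul_assoc] using hprod.mul hprod'⟩

lemma mul_left (k : G) (hgh : ConvertibleIn R n g h) : ConvertibleIn R n (k * g) (k * h) := by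
  obtain ⟨L, hL, hprod⟩ := hgh
  exact ⟨L, hL, by simpa only [mul_inv_rev, mul_assoc] using hprod.conj k⟩

lemma mul_right (k : G) (hgh : ConvertibleIn R n g h) : ConvertibleIn R n (g * k) (h * k) := by
  obtain ⟨L, hL, hprod⟩ := hgh
  exact ⟨L, hL, by simpa [mul_assoc] using hprod⟩

lemma mul (hg : ConvertibleIn R m g g') (hh : ConvertibleIn R n h h') :
    ConvertibleIn R (m + n) (g * h) (g' * h') :=
  (hg.mul_right h).trans (hh.mul_left g')

lemma conj (k : G) (hgh : ConvertibleIn R n g h) :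
    ConvertibleIn R n (k * g * k⁻¹) (k * h * k⁻¹) :=
  (hgh.mul_left k).mul_right k⁻¹

lemma inv (hgh : ConvertibleIn R n g h) : ConvertibleIn R n g⁻¹ h⁻¹ := by
  simpa using (hgh.symm.mul_left g⁻¹).mul_right h⁻¹

lemma of_mem (hg : g ∈ R) : ConvertibleIn R 1 g 1 :=
  ⟨1, le_rfl, by simpa using IsProdConjPM.of_mem hg⟩

lemma to_inv_of_mul (hgh : ConvertibleIn R n (g * h) 1) : ConvertibleIn R n g h⁻¹ := by
  simpa using hgh.mul_right h⁻¹

lemma mul_mul_rotate (huvw : ConvertibleIn R n (u * v * w) 1) :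
    ConvertibleIn R n (v * w * u) 1 := by
  simpa [mul_assoc] using huvw.conj u⁻¹

end ConvertibleIn

section SignedLetters

variable {α : Type*} {R : Set (FreeGroup α)} {n : ℕ} {x y z : α}

lemma convertibleIn_change_sign (hsq : FreeGroup.of x ^ 2 ∈ R) (e f : Bool) :
    ConvertibleIn R 1 (FreeGroup.mk [(x, e)]) (FreeGroup.mk [(x, f)]) := by
  have of_inv : ConvertibleIn R 1 (FreeGroup.of x) (FreeGroup.of x)⁻¹ :=
    ConvertibleIn.to_inv_of_mul (pow_two (FreeGroup.of x) ▸ .of_mem hsq)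
  match e, f with
  | true, true | false, false => exact (ConvertibleIn.refl _).mono zero_le_one
  | true, false => exact of_inv
  | false, true => exact of_inv.symm

lemma convertibleIn_change_signs_pair (hx : FreeGroup.of x ^ 2 ∈ R) (hy : FreeGroup.of y ^ 2 ∈ R)
    (e f e' f' : Bool) :
    ConvertibleIn R 2 (FreeGroup.mk [(x, e), (y, f)]) (FreeGroup.mk [(x, e'), (y, f')]) :=
  (convertibleIn_change_sign hx e e').mul (convertibleIn_change_sign hy f f')

lemma convertibleIn_pair_self_one (hsq : FreeGroup.of x ^ 2 ∈ R) (e f : Bool) :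
    ConvertibleIn R 1 (FreeGroup.mk [(x, e), (x, f)]) 1 := by
  have cancel : FreeGroup.mk [(x, !f)] * FreeGroup.mk [(x, f)] = 1 := by
    cases f
    · exact mul_inv_cancel (FreeGroup.of x)
    · exact inv_mul_cancel (FreeGroup.of x)
  exact cancel ▸ (convertibleIn_change_sign hsq e !f).mul_right (FreeGroup.mk [(x, f)])

lemma convertibleIn_pair_of_mul_mul (hx : FreeGroup.of x ^ 2 ∈ R) (hy : FreeGroup.of y ^ 2 ∈ R)
    (hxyz : ConvertibleIn R n (FreeGroup.of x * FreeGroup.of y * FreeGroup.of z) 1)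
    (e f : Bool) :
    ConvertibleIn R (2 + n) (FreeGroup.mk [(x, e), (y, f)]) (FreeGroup.mk [(z, false)]) :=
  (convertibleIn_change_signs_pair hx hy e f true true).trans hxyz.to_inv_of_mul

lemma convertibleIn_swapped_pair_of_mul_mul (hx : FreeGroup.of x ^ 2 ∈ R)
    (hy : FreeGroup.of y ^ 2 ∈ R)
    (hxyz : ConvertibleIn R n (FreeGroup.of x * FreeGroup.of y * FreeGroup.of z) 1)
    (e f : Bool) :
    ConvertibleIn R (2 + n) (FreeGroup.mk [(y, e), (x, f)]) (FreeGroup.mk [(z, true)]) := by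
  have inverse_pair : ConvertibleIn R n (FreeGroup.mk [(y, false), (x, false)])
      (FreeGroup.mk [(z, true)]) := hxyz.to_inv_of_mul.inv
  exact (convertibleIn_change_signs_pair hy hx e f false false).trans inverse_pair

lemma convertibleIn_positive_word (hsq : ∀ x, FreeGroup.of x ^ 2 ∈ R) (w : List (α × Bool)) :
    ConvertibleIn R w.length (FreeGroup.mk w) ((w.map Prod.fst).map FreeGroup.of).prod := by
  induction w with
  | nil => exact .refl 1
  | cons p w ih =>
    rw [List.length_cons, add_comm]
    exact (convertibleIn_change_sign (hsq p.1) p.2 true).mul ih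

end SignedLetters

section CyclicReduction

variable {α : Type*} {R : Set (FreeGroup α)} {K : ℕ} {P : α → α → Prop}

/-- No two consecutive letters of a cyclic permutation of `l` are related by `P`. A one-letter
word is not adjacent to itself: only honest subwords of length two of the rotations count. -/
def CyclicallyAvoids (P : α → α → Prop) (l : List α) : Prop :=
  ∀ k : ℕ, ∀ x y : α, [x, y] <:+: l.rotate k → ¬ P x y

/-- Over the relators `R`, any pair of letters related by `P`, whatever their signs, can be
replaced by a word of at most one letter at the cost of at most `K` relators. -/
def ContractsPairs (R : Set (FreeGroup α)) (K : ℕ) (P : α → α → Prop) : Prop :=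
  ∀ x y, P x y → ∀ e f : Bool, ∃ q : List (α × Bool), q.length ≤ 1 ∧
    ConvertibleIn R K (FreeGroup.mk [(x, e), (y, f)]) (FreeGroup.mk q)

lemma exists_mk_eq_conj_mk_rotate (w : List (α × Bool)) (k : ℕ) :
    ∃ Z, FreeGroup.mk w = Z * FreeGroup.mk (w.rotate k) * Z⁻¹ := by
  refine ⟨FreeGroup.mk (w.take (k % w.length)), ?_⟩
  rw [List.rotate_eq_drop_append_take_mod, ← FreeGroup.mul_mk, ← mul_assoc, mul_inv_cancel_right,
    FreeGroup.mul_mk, List.take_append_drop]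

lemma exists_rotate_eq_append_of_not_cyclicallyAvoids {w : List (α × Bool)}
    (hw : ¬ CyclicallyAvoids P (w.map Prod.fst)) :
    ∃ k s x e y f t, P x y ∧ w.rotate k = s ++ [(x, e), (y, f)] ++ t := by
  simp only [CyclicallyAvoids, not_forall, not_not] at hw
  obtain ⟨k, x, y, hinfix, hP⟩ := hw
  rw [← List.map_rotate, List.infix_map_iff] at hinfix
  obtain ⟨pair, ⟨s, t, hst⟩, hpair⟩ := hinfix
  obtain ⟨⟨_, e⟩, ⟨_, f⟩, rfl⟩ : ∃ p q, pair = [p, q] :=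
    List.length_eq_two.mp (by simpa using congrArg List.length hpair.symm)
  simp only [List.map_cons, List.map_nil, List.cons.injEq, and_true] at hpair
  obtain ⟨rfl, rfl⟩ := hpair
  exact ⟨k, s, x, e, y, f, t, hP, hst.symm⟩

lemma ContractsPairs.exists_shorter (hR : ContractsPairs R K P) {w : List (α × Bool)}
    (hw : ¬ CyclicallyAvoids P (w.map Prod.fst)) :
    ∃ (Z : FreeGroup α) (w' : List (α × Bool)), w'.length < w.length ∧
      ConvertibleIn R K (FreeGroup.mk w) (Z * FreeGroup.mk w' * Z⁻¹) := by
  obtain ⟨k, s, x, e, y, f, t, hP, hrot⟩ := exists_rotate_eq_append_of_not_cyclicallyAvoids hw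
  obtain ⟨q, hq, hconv⟩ := hR x y hP e f
  obtain ⟨Z, hZ⟩ := exists_mk_eq_conj_mk_rotate w k
  refine ⟨Z, s ++ q ++ t, ?_, ?_⟩
  · have hlength := congrArg List.length hrot
    simp only [List.length_rotate, List.length_append, List.length_cons, List.length_nil]
      at hlength ⊢
    lia
  · rw [hZ, hrot]
    simp only [← FreeGroup.mul_mk (L₂ := t), ← FreeGroup.mul_mk (L₁ := s)]
    exact ((hconv.mul_left _).mul_right _).conj Z

lemma ContractsPairs.exists_convertibleIn_positive_word (hR : ContractsPairs R K P) (hK : 1 ≤ K)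
    (hsq : ∀ x, FreeGroup.of x ^ 2 ∈ R) (w : List (α × Bool)) :
    ∃ (Z : FreeGroup α) (l : List α), l.length ≤ w.length ∧ CyclicallyAvoids P l ∧
      ConvertibleIn R (K * w.length) (FreeGroup.mk w) (Z * (l.map FreeGroup.of).prod * Z⁻¹) := by
  induction hn : w.length using Nat.strong_induction_on generalizing w with
  | _ n ih =>
  subst hn
  by_cases hw : CyclicallyAvoids P (w.map Prod.fst)
  · refine ⟨1, w.map Prod.fst, by simp, hw, ?_⟩
    simpa using (convertibleIn_positive_word hsq w).mono (Nat.le_mul_of_pos_left _ hK)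
  · obtain ⟨Z, w', hlt, hconv⟩ := hR.exists_shorter hw
    obtain ⟨Y, l, hl, havoid, hconv'⟩ := ih w'.length hlt w' rfl
    have hcost : K + K * w'.length ≤ K * w.length := by
      rw [add_comm, ← Nat.mul_succ]
      exact Nat.mul_le_mul_left K hlt
    refine ⟨Z * Y, l, hl.trans hlt.le, havoid, ?_⟩
    simpa [mul_assoc] using (hconv.trans (hconv'.conj Z)).mono hcost

end CyclicReduction

/-- The relators `a², b², c², d², bcd`. -/
def shortRelators : Set F4 := {ga ^ 2, gb ^ 2, gc ^ 2, gd ^ 2, gb * gc * gd}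

/-- The pairs of letters that may not be adjacent in the reduced word: `aa`, and `g₁g₂` with
`g₁, g₂ ∈ {b, c, d}`. -/
def IsForbiddenPair (g₁ g₂ : L4) : Prop :=
  (g₁ = L4.a ∧ g₂ = L4.a) ∨
    (g₁ ∈ ({L4.b, L4.c, L4.d} : Set L4) ∧ g₂ ∈ ({L4.b, L4.c, L4.d} : Set L4))

lemma of_sq_mem_shortRelators (x : L4) : FreeGroup.of x ^ 2 ∈ shortRelators := by
  cases x <;> simp [shortRelators, ga, gb, gc, gd]

lemma contractsPairs_shortRelators : ContractsPairs shortRelators 3 IsForbiddenPair := by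
  have bcd : ConvertibleIn shortRelators 1 (gb * gc * gd) 1 := .of_mem (by simp [shortRelators])
  have cdb := bcd.mul_mul_rotate
  have dbc := cdb.mul_mul_rotate
  have sq := of_sq_mem_shortRelators
  intro x y hxy e f
  by_cases heq : x = y
  · subst heq
    exact ⟨[], by simp, (convertibleIn_pair_self_one (sq x) e f).mono (by simp)⟩
  suffices ∃ p : L4 × Bool, ConvertibleIn shortRelators 3 (FreeGroup.mk [(x, e), (y, f)])
      (FreeGroup.mk [p]) from
    let ⟨p, hp⟩ := this
    ⟨[p], by simp, hp⟩
  cases x <;> cases y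
  case b.c => exact ⟨_, convertibleIn_pair_of_mul_mul (sq _) (sq _) bcd e f⟩
  case c.d => exact ⟨_, convertibleIn_pair_of_mul_mul (sq _) (sq _) cdb e f⟩
  case d.b => exact ⟨_, convertibleIn_pair_of_mul_mul (sq _) (sq _) dbc e f⟩
  case c.b => exact ⟨_, convertibleIn_swapped_pair_of_mul_mul (sq _) (sq _) bcd e f⟩
  case d.c => exact ⟨_, convertibleIn_swapped_pair_of_mul_mul (sq _) (sq _) cdb e f⟩
  case b.d => exact ⟨_, convertibleIn_swapped_pair_of_mul_mul (sq _) (sq _) dbc e f⟩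
  all_goals simp [IsForbiddenPair] at hxy heq

/-- every `W ∈ F(a,b,c,d)` can be transformed, by at most `3|W|`
applications of the relators `a², b², c², d², bcd`, into (a conjugate of) a
positive word `U` of length at most `|W|` no cyclic permutation of which
contains a subword `aa` or `g₁g₂` with `g₁, g₂ ∈ {b, c, d}`. -/
theorem reduction_to_positive_word :
    ∀ W : F4, ∃ (U Z : F4) (l : List L4),
      U = (l.map FreeGroup.of).prod ∧
      l.length ≤ FreeGroup.norm W ∧
      (∀ k : ℕ, ∀ g₁ g₂ : L4, [g₁, g₂] <:+: l.rotate k →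
        ¬((g₁ = L4.a ∧ g₂ = L4.a) ∨
          (g₁ ∈ ({L4.b, L4.c, L4.d} : Set L4) ∧
           g₂ ∈ ({L4.b, L4.c, L4.d} : Set L4)))) ∧
      ∃ L : ℕ, L ≤ 3 * FreeGroup.norm W ∧
        IsProdConjPM ({ga ^ 2, gb ^ 2, gc ^ 2, gd ^ 2, gb * gc * gd} : Set F4)
          L (W * (Z * U * Z⁻¹)⁻¹) := by
  intro W
  obtain ⟨Z, l, hl, havoid, hconv⟩ :=
    contractsPairs_shortRelators.exists_convertibleIn_positive_word (by simp)
      of_sq_mem_shortRelators W.toWord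
  rw [FreeGroup.mk_toWord] at hconv
  exact ⟨_, Z, l, rfl, hl, havoid, hconv⟩
end

section
/- Let A₀ be a finite alphabet, R₀ a finite set of nonempty cyclically reduced words of the free group F(A₀), t a letter not in A₀, A = A₀ ∪ {t}, and π_t : F(A) → F(A₀) the homomorphism fixing each letter of A₀ and sending t to 1. Let N_t be the set of all nonempty cyclically reduced elements of the kernel of π_t, and let V_t be the set of all words X₁ t R₁ t X₁⁻¹ t X₂ t R₂ t X₂⁻¹ t ⋯ X_k t R_k t X_k⁻¹ t with k ≥ 1, R_i ∈ R₀ ∪ R₀⁻¹, and X_i reduced words of F(A₀). Then a word W ∈ F(A) belongs to the normal closure of N_t ∪ V_t in F(A) if and only if π_t(W) belongs to the normal closure of R₀ in F(A₀). -/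
/-- An element of a free group is cyclically reduced if its reduced word is
cyclically reduced: whenever the reduced word starts with the letter `x` and
ends with the letter `y` with `x.1 = y.1`, then `x.2 = y.2` (the first letter
is not the inverse of the last one). -/
def IsCyclicallyReduced {β : Type} [DecidableEq β] (w : FreeGroup β) : Prop :=
  ∀ (x y : β × Bool) (l : List (β × Bool)),
    w.toWord = x :: (l ++ [y]) → x.1 = y.1 → x.2 = y.2

section

variable {α : Type} [DecidableEq α]

/-- The new letter `t` adjoined to the alphabet `A₀` (`t = none`). -/
def tt : FreeGroup (Option α) := FreeGroup.of none

/-- The retraction `π_t : F(A) → F(A₀)` fixing each letter of `A₀` and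
sending `t` to `1`. -/
def pit : FreeGroup (Option α) →* FreeGroup α :=
  FreeGroup.lift fun x => x.elim 1 FreeGroup.of

/-- The inclusion `F(A₀) → F(A)`. -/
def iot : FreeGroup α →* FreeGroup (Option α) :=
  FreeGroup.map some

/-- `N_t`: the set of all nonempty cyclically reduced elements of the kernel
of `π_t` (equivalently, of the normal closure of `t` in `F(A)`). -/
def Nt : Set (FreeGroup (Option α)) :=
  {w | w ≠ 1 ∧ IsCyclicallyReduced w ∧ w ∈ pit.ker}

/-- `V_t`: the set of all words
`X₁ t R₁ t X₁⁻¹ t X₂ t R₂ t X₂⁻¹ t ⋯ X_k t R_k t X_k⁻¹ t` with `k ≥ 1`,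
`R_i ∈ R₀ ∪ R₀⁻¹` and `X_i ∈ F(A₀)`. -/
def Vt (R₀ : Set (FreeGroup α)) : Set (FreeGroup (Option α)) :=
  {w | ∃ k : ℕ, 0 < k ∧ ∃ R X : Fin k → FreeGroup α,
    (∀ i, R i ∈ R₀ ∪ R₀⁻¹) ∧
    w = (List.ofFn fun i =>
          iot (X i) * tt * iot (R i) * tt * (iot (X i))⁻¹ * tt).prod}

end

/-!
Since `t ∈ N_t` and `ker π_t` is the normal closure of `t`, the normal closure of `N_t ∪ V_t`
contains `ker π_t`, hence is the full preimage of its image under the surjection `π_t`. That image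
is the normal closure of `π_t(N_t ∪ V_t)`. The map `π_t` kills `N_t` and sends the words of `V_t` to
the products of conjugates of elements of `R₀ ∪ R₀⁻¹`, so the image is the normal closure of `R₀`.
-/

section NormalClosure

variable {G H : Type*} [Group G] [Group H]

theorem comap_normalClosure_image {f : G →* H} (hf : Function.Surjective f) {S : Set G}
    (hker : f.ker ≤ Subgroup.normalClosure S) :
    (Subgroup.normalClosure (f '' S)).comap f = Subgroup.normalClosure S := by
  rw [← Subgroup.map_normalClosure S f hf, Subgroup.comap_map_eq_self hker]

theorem union_inv_subset_normalClosure (R : Set G) :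
    R ∪ R⁻¹ ⊆ Subgroup.normalClosure R :=
  Set.union_subset Subgroup.subset_normalClosure fun _ hr =>
    inv_mem_iff.1 (Subgroup.subset_normalClosure hr)

end NormalClosure

theorem isCyclicallyReduced_of {β : Type} [DecidableEq β] (b : β) :
    IsCyclicallyReduced (FreeGroup.of b) := by
  intro x y l h
  simp [FreeGroup.toWord_of] at h

section Retraction

variable {α : Type}

@[simp]
theorem pit_tt : pit (tt : FreeGroup (Option α)) = 1 := by
  simp [pit, tt]

@[simp]
theorem pit_iot (x : FreeGroup α) : pit (iot x) = x := by
  have pit_comp_iot : pit.comp iot = MonoidHom.id (FreeGroup α) := by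
    ext a
    simp [pit, iot]
  exact DFunLike.congr_fun pit_comp_iot x

theorem pit_surjective : Function.Surjective (pit : FreeGroup (Option α) →* FreeGroup α) :=
  Function.LeftInverse.surjective pit_iot

theorem mk'_comp_iot_comp_pit {N : Subgroup (FreeGroup (Option α))} [N.Normal] (ht : tt ∈ N) :
    (QuotientGroup.mk' N).comp (iot.comp pit) = QuotientGroup.mk' N := by
  ext a
  cases a with
  | none => simpa [pit, tt] using ((QuotientGroup.eq_one_iff tt).2 ht).symm
  | some a => simp [pit, iot]

theorem ker_pit : (pit : FreeGroup (Option α) →* FreeGroup α).ker =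
    Subgroup.normalClosure {tt} := by
  apply le_antisymm
  · intro w hw
    have ht : tt ∈ Subgroup.normalClosure {(tt : FreeGroup (Option α))} :=
      Subgroup.subset_normalClosure rfl
    have mk_w := DFunLike.congr_fun (mk'_comp_iot_comp_pit ht) w
    rw [MonoidHom.comp_apply, MonoidHom.comp_apply, MonoidHom.mem_ker.1 hw, map_one,
      map_one] at mk_w
    exact (QuotientGroup.eq_one_iff w).1 mk_w.symm
  · exact Subgroup.normalClosure_le_normal (Set.singleton_subset_iff.2 pit_tt)

end Retraction

section RelatorSets

variable {α : Type}

theorem tt_mem_Nt [DecidableEq α] : (tt : FreeGroup (Option α)) ∈ Nt :=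
  ⟨FreeGroup.of_ne_one none, isCyclicallyReduced_of none, pit_tt⟩

theorem ker_pit_le_normalClosure_Nt [DecidableEq α] :
    (pit : FreeGroup (Option α) →* FreeGroup α).ker ≤ Subgroup.normalClosure Nt :=
  ker_pit.trans_le (Subgroup.normalClosure_mono (Set.singleton_subset_iff.2 tt_mem_Nt))

theorem pit_mem_normalClosure_of_mem_Vt {R₀ : Set (FreeGroup α)} {w : FreeGroup (Option α)}
    (hw : w ∈ Vt R₀) : pit w ∈ Subgroup.normalClosure R₀ := by
  obtain ⟨k, -, R, X, hR, rfl⟩ := hw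
  rw [← Subgroup.mem_comap]
  refine Subgroup.list_prod_mem _ (List.forall_mem_ofFn_iff.2 fun i => ?_)
  have conj_mem : X i * R i * (X i)⁻¹ ∈ Subgroup.normalClosure R₀ :=
    Subgroup.normalClosure_normal.conj_mem _ (union_inv_subset_normalClosure R₀ (hR i)) _
  simpa using conj_mem

theorem tt_mul_iot_mul_tt_mul_tt_mem_Vt {R₀ : Set (FreeGroup α)} {r : FreeGroup α}
    (hr : r ∈ R₀) : tt * iot r * tt * tt ∈ Vt R₀ :=
  ⟨1, one_pos, fun _ => r, fun _ => 1, fun _ => Or.inl hr, by simp⟩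

theorem subset_pit_image_Vt (R₀ : Set (FreeGroup α)) : R₀ ⊆ pit '' Vt R₀ :=
  fun _ hr => ⟨_, tt_mul_iot_mul_tt_mul_tt_mem_Vt hr, by simp⟩

theorem normalClosure_pit_image_Nt_union_Vt [DecidableEq α] (R₀ : Set (FreeGroup α)) :
    Subgroup.normalClosure (pit '' (Nt ∪ Vt R₀)) = Subgroup.normalClosure R₀ := by
  apply le_antisymm
  · apply Subgroup.normalClosure_le_normal
    rintro _ ⟨w, ⟨-, -, hw⟩ | hw, rfl⟩
    · exact MonoidHom.mem_ker.1 hw ▸ one_mem _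
    · exact pit_mem_normalClosure_of_mem_Vt hw
  · exact Subgroup.normalClosure_mono
      ((subset_pit_image_Vt R₀).trans (Set.image_mono Set.subset_union_right))

end RelatorSets

theorem referee_presentation_word_problem_general {α : Type} [DecidableEq α]
    (R₀ : Set (FreeGroup α)) (W : FreeGroup (Option α)) :
    W ∈ Subgroup.normalClosure (Nt ∪ Vt R₀) ↔ pit W ∈ Subgroup.normalClosure R₀ := by
  have ker_le : pit.ker ≤ Subgroup.normalClosure (Nt ∪ Vt R₀) :=
    ker_pit_le_normalClosure_Nt.trans (Subgroup.normalClosure_mono Set.subset_union_left)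
  rw [← comap_normalClosure_image pit_surjective ker_le, Subgroup.mem_comap,
    normalClosure_pit_image_Nt_union_Vt]

/-- a word `W ∈ F(A)` lies in the normal closure of `N_t ∪ V_t`
if and only if `π_t(W)` lies in the normal closure of `R₀` in `F(A₀)`. -/
theorem referee_presentation_word_problem {α : Type} [DecidableEq α] [Fintype α]
    (R₀ : Set (FreeGroup α)) (hfin : R₀.Finite)
    (hR₀ : ∀ r ∈ R₀, r ≠ 1 ∧ IsCyclicallyReduced r) :
    ∀ W : FreeGroup (Option α),
      W ∈ Subgroup.normalClosure (Nt ∪ Vt R₀) ↔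
        pit W ∈ Subgroup.normalClosure R₀ :=
  referee_presentation_word_problem_general R₀
end

section
/- Let K be a subset of the positive integers with 1 ∈ K, enumerated by a surjection i ↦ k_i from the positive integers onto K with k₁ = 1, and let R = {a^i : i ≥ 1} ∪ {a^i b^{k_i} : i ≥ 1} in the free group F(a,b). Then: (i) the normal closure of R in F(a,b) is all of F(a,b) (the presentation ⟨a, b ∥ R⟩ defines the trivial group); and (ii) for every integer k ≥ 1, the element b^k can be written as a product of at most 2 conjugates of elements of R ∪ R⁻¹ if and only if k ∈ K. -/
/-- The generator `a` of the free group `F(a, b)`. -/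
def fa : FreeGroup Bool := FreeGroup.of true

/-- The generator `b` of the free group `F(a, b)`. -/
def fb : FreeGroup Bool := FreeGroup.of false

/-- The relator set `R = {aⁱ : i ≥ 1} ∪ {aⁱ b^{k_i} : i ≥ 1}`. -/
def RJK (k : ℕ → ℕ) : Set (FreeGroup Bool) :=
  {w | ∃ i : ℕ, 1 ≤ i ∧ w = fa ^ i} ∪ {w | ∃ i : ℕ, 1 ≤ i ∧ w = fa ^ i * fb ^ k i}

/-!
Send `F(a, b)` to its abelianization `ℤ²` by exponent sums. Every relator has a positive
`a`-exponent while `b ^ m` has `a`-exponent `0`, so a product of at most two conjugates of relators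
or inverse relators that equals `b ^ m ≠ 1` must involve one relator and one inverse relator with
the same `a`-exponent `i`. Their `b`-exponents lie in `{0, k i}`, and the difference `m > 0` of two
elements of this set is `k i`. Conversely, `b ^ k i = (a ^ i)⁻¹ * (a ^ i * b ^ k i)`.
-/

theorem eq_one_or_exists_eq_div_of_map_prod_eq_one {A B : Type*} [CommGroup A] [CommGroup B]
    [PartialOrder B] [IsOrderedMonoid B] {S : Set A} {φ : A →* B} (hφ : ∀ s ∈ S, 1 < φ s)
    {L : ℕ} (hL : L ≤ 2) {u : Fin L → A} (hu : ∀ j, u j ∈ S ∨ (u j)⁻¹ ∈ S)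
    (hprod : φ (∏ j, u j) = 1) :
    ∏ j, u j = 1 ∨ ∃ r ∈ S, ∃ s ∈ S, φ r = φ s ∧ ∏ j, u j = r / s := by
  interval_cases L
  · exact Or.inl (Fin.prod_univ_zero u)
  · rw [Fin.prod_univ_one] at hprod
    rcases hu 0 with hmem | hmem
    · exact absurd hprod (hφ _ hmem).ne'
    · exact absurd (by rw [map_inv, hprod, inv_one]) (hφ _ hmem).ne'
  · rw [Fin.prod_univ_two, map_mul] at hprod
    rw [Fin.prod_univ_two]
    rcases hu 0 with h₀ | h₀ <;> rcases hu 1 with h₁ | h₁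
    · exact absurd hprod (one_lt_mul'' (hφ _ h₀) (hφ _ h₁)).ne'
    · refine Or.inr ⟨u 0, h₀, (u 1)⁻¹, h₁, ?_, (div_inv_eq_mul _ _).symm⟩
      rw [map_inv, eq_inv_of_mul_eq_one_left hprod]
    · refine Or.inr ⟨u 1, h₁, (u 0)⁻¹, h₀, ?_, by rw [div_inv_eq_mul, mul_comm]⟩
      rw [map_inv, eq_inv_of_mul_eq_one_right hprod]
    · have hlt := one_lt_mul'' (hφ _ h₀) (hφ _ h₁)
      rw [map_inv, map_inv, ← mul_inv, hprod, inv_one] at hlt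
      exact absurd hlt (lt_irrefl 1)

namespace IsProdConjPM

variable {G : Type*} [Group G] {R : Set G}

theorem exists_map_eq_prod {A : Type*} [CommGroup A] (φ : G →* A) {L : ℕ} {W : G}
    (hW : IsProdConjPM R L W) :
    ∃ u : Fin L → A, (∀ j, u j ∈ φ '' R ∨ (u j)⁻¹ ∈ φ '' R) ∧ φ W = ∏ j, u j := by
  obtain ⟨f, hf, rfl⟩ := hW
  refine ⟨φ ∘ f, fun j ↦ ?_, by rw [map_list_prod, List.map_ofFn, List.prod_ofFn]⟩
  obtain ⟨x, r, hr, hfj | hfj⟩ := hf j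
  · exact Or.inl ⟨r, hr, by simp [hfj]⟩
  · exact Or.inr ⟨r, hr, by simp [hfj]⟩

theorem inv_mul {r s : G} (hr : r ∈ R) (hs : s ∈ R) : IsProdConjPM R 2 (r⁻¹ * s) := by
  refine ⟨![r⁻¹, s], Fin.forall_fin_two.2 ⟨?_, ?_⟩, by simp⟩
  · exact ⟨1, r, hr, Or.inr (by simp)⟩
  · exact ⟨1, s, hs, Or.inl (by simp)⟩

end IsProdConjPM

/-- The abelianization map `F(ι) → ℤ^ι`, whose coordinate at `x` is the exponent sum of the
generator `x`; the target is written multiplicatively. -/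
def exponentSums (ι : Type*) [DecidableEq ι] : FreeGroup ι →* (ι → Multiplicative ℤ) :=
  FreeGroup.lift fun x ↦ Pi.mulSingle x (Multiplicative.ofAdd 1)

theorem exponentSums_of {ι : Type*} [DecidableEq ι] (x : ι) :
    exponentSums ι (FreeGroup.of x) = Pi.mulSingle x (Multiplicative.ofAdd 1) :=
  FreeGroup.lift_apply_of

theorem exponentSums_fa_pow_mul_fb_pow_true (i n : ℕ) :
    exponentSums Bool (fa ^ i * fb ^ n) true = Multiplicative.ofAdd (i : ℤ) := by
  simp [fa, fb, exponentSums_of, ← ofAdd_nsmul]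

theorem exponentSums_fa_pow_mul_fb_pow_false (i n : ℕ) :
    exponentSums Bool (fa ^ i * fb ^ n) false = Multiplicative.ofAdd (n : ℤ) := by
  simp [fa, fb, exponentSums_of, ← ofAdd_nsmul]

theorem exists_eq_fa_pow_mul_fb_pow_of_mem_RJK {k : ℕ → ℕ} {r : FreeGroup Bool}
    (hr : r ∈ RJK k) : ∃ i n : ℕ, 1 ≤ i ∧ (n = 0 ∨ n = k i) ∧ r = fa ^ i * fb ^ n := by
  rcases hr with ⟨i, hi, rfl⟩ | ⟨i, hi, rfl⟩
  · exact ⟨i, 0, hi, Or.inl rfl, by rw [pow_zero, mul_one]⟩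
  · exact ⟨i, k i, hi, Or.inr rfl, rfl⟩

theorem one_lt_exponentSums_true_of_mem_RJK {k : ℕ → ℕ} {r : FreeGroup Bool}
    (hr : r ∈ RJK k) : 1 < exponentSums Bool r true := by
  obtain ⟨i, n, hi, -, rfl⟩ := exists_eq_fa_pow_mul_fb_pow_of_mem_RJK hr
  rw [exponentSums_fa_pow_mul_fb_pow_true, ← ofAdd_zero, Multiplicative.ofAdd_lt]
  exact_mod_cast hi

theorem exists_eq_of_isProdConjPM_fb_pow {k : ℕ → ℕ} {m L : ℕ} (hm : 1 ≤ m) (hL : L ≤ 2)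
    (hW : IsProdConjPM (RJK k) L (fb ^ m)) : ∃ i, 1 ≤ i ∧ k i = m := by
  obtain ⟨u, hu, hprod⟩ := hW.exists_map_eq_prod (exponentSums Bool)
  have htrue := exponentSums_fa_pow_mul_fb_pow_true 0 m
  have hfalse := exponentSums_fa_pow_mul_fb_pow_false 0 m
  rw [pow_zero, one_mul, hprod] at htrue hfalse
  have hpos : ∀ v ∈ exponentSums Bool '' RJK k,
      1 < Pi.evalMonoidHom (fun _ ↦ Multiplicative ℤ) true v :=
    Set.forall_mem_image.2 fun _ ↦ one_lt_exponentSums_true_of_mem_RJK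
  rcases eq_one_or_exists_eq_div_of_map_prod_eq_one hpos hL hu htrue with
    hone | ⟨_, ⟨r, hr, rfl⟩, _, ⟨s, hs, rfl⟩, hrs, hdiv⟩
  · rw [hone, Pi.one_apply, ← ofAdd_zero, Multiplicative.ofAdd.injective.eq_iff] at hfalse
    omega
  · obtain ⟨i, n, hi, hn, rfl⟩ := exists_eq_fa_pow_mul_fb_pow_of_mem_RJK hr
    obtain ⟨j, p, -, hp, rfl⟩ := exists_eq_fa_pow_mul_fb_pow_of_mem_RJK hs
    obtain rfl : i = j := by
      rw [Pi.evalMonoidHom_apply, Pi.evalMonoidHom_apply, exponentSums_fa_pow_mul_fb_pow_true,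
        exponentSums_fa_pow_mul_fb_pow_true] at hrs
      exact_mod_cast Multiplicative.ofAdd.injective hrs
    have hdiff : (n : ℤ) - p = m := by
      rw [hdiv, Pi.div_apply, exponentSums_fa_pow_mul_fb_pow_false,
        exponentSums_fa_pow_mul_fb_pow_false, ← ofAdd_sub] at hfalse
      exact Multiplicative.ofAdd.injective hfalse
    exact ⟨i, hi, by omega⟩

theorem isProdConjPM_two_fb_pow (k : ℕ → ℕ) {i : ℕ} (hi : 1 ≤ i) :
    IsProdConjPM (RJK k) 2 (fb ^ k i) := by
  have ha : fa ^ i ∈ RJK k := Or.inl ⟨i, hi, rfl⟩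
  have hab : fa ^ i * fb ^ k i ∈ RJK k := Or.inr ⟨i, hi, rfl⟩
  simpa only [inv_mul_cancel_left] using IsProdConjPM.inv_mul ha hab

theorem normalClosure_RJK_eq_top {k : ℕ → ℕ} (hk1 : k 1 = 1) :
    Subgroup.normalClosure (RJK k) = ⊤ := by
  have ha : fa ∈ Subgroup.normalClosure (RJK k) :=
    Subgroup.subset_normalClosure (Or.inl ⟨1, le_rfl, (pow_one fa).symm⟩)
  have hab : fa * fb ∈ Subgroup.normalClosure (RJK k) :=
    Subgroup.subset_normalClosure (Or.inr ⟨1, le_rfl, by rw [hk1, pow_one, pow_one]⟩)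
  have hb : fb ∈ Subgroup.normalClosure (RJK k) := (Subgroup.mul_mem_cancel_left _ ha).1 hab
  rw [eq_top_iff, ← FreeGroup.closure_range_of, Subgroup.closure_le, Set.range_subset_iff]
  exact Bool.forall_bool.2 ⟨hb, ha⟩

/-- Jockusch–Kapovich example: the presentation
`⟨a, b ∥ aⁱ, aⁱ b^{k_i} (i ≥ 1)⟩` defines the trivial group, and `b^k` is a
product of at most `2` conjugates of relators or their inverses iff `k ∈ K`. -/
theorem jockusch_kapovich_example (K : Set ℕ) (hKpos : ∀ n ∈ K, 0 < n)
    (hK1 : 1 ∈ K) (k : ℕ → ℕ) (hkK : ∀ i : ℕ, 1 ≤ i → k i ∈ K)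
    (hsurj : ∀ n ∈ K, ∃ i : ℕ, 1 ≤ i ∧ k i = n) (hk1 : k 1 = 1) :
    Subgroup.normalClosure (RJK k) = ⊤ ∧
    ∀ m : ℕ, 1 ≤ m →
      ((∃ L : ℕ, L ≤ 2 ∧ IsProdConjPM (RJK k) L (fb ^ m)) ↔ m ∈ K) := by
  refine ⟨normalClosure_RJK_eq_top hk1, fun m hm ↦ ⟨?_, fun hmK ↦ ?_⟩⟩
  · rintro ⟨L, hL, hW⟩
    obtain ⟨i, hi, rfl⟩ := exists_eq_of_isProdConjPM_fb_pow hm hL hW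
    exact hkK i hi
  · obtain ⟨i, hi, rfl⟩ := hsurj m hmK
    exact ⟨2, le_rfl, isProdConjPM_two_fb_pow k hi⟩
end

section
/- Let R = {a^i b a^{-i} b^{-1} : i ≥ 1} in the free group F(a,b). Then the normal closure of R in F(a,b) equals the commutator subgroup [F(a,b), F(a,b)] (so the presentation ⟨a, b ∥ R⟩ defines the free abelian group of rank 2), and there exists a constant C > 0 such that every element W of [F(a,b), F(a,b)] with |W| ≤ x can be written as a product of at most C·x conjugates of elements of R ∪ R⁻¹; that is, the Dehn 2-function of this presentation is bounded by a linear function. -/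
/-- The relator set `R = {aⁱ b a⁻ⁱ b⁻¹ : i ≥ 1}`. -/
def Rab : Set (FreeGroup Bool) :=
  {w | ∃ i : ℕ, 1 ≤ i ∧ w = fa ^ i * fb * (fa ^ i)⁻¹ * fb⁻¹}

/-!
Modulo conjugates of relators, every word `w` can be brought to the form `a ^ n * b ^ m` by reading
it from right to left. A letter `a ^ ±1` in front of `a ^ n * b ^ m` is absorbed for free, and a
letter `b ^ ±1` has to cross `a ^ n`, which costs the single commutator `⁅b ^ ±1, a ^ n⁆`: a
conjugate of a relator or of its inverse, because *every* power of `a` occurs in the relators. So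
the cost is at most `|w|`. The exponents `n` and `m` are the exponent sums of `w`, which vanish on
the commutator subgroup.
-/

open Multiplicative (toAdd ofAdd)
open scoped Pointwise commutatorElement

section Area

variable {G : Type*} [Group G] {R : Set G} {L M : ℕ} {V W g h : G}

theorem isProdConjPM_iff_mem_pow :
    IsProdConjPM R L W ↔ W ∈ Group.conjugatesOfSet (R ∪ R⁻¹) ^ L := by
  have mem_conjugates (y : G) : y ∈ Group.conjugatesOfSet (R ∪ R⁻¹) ↔
      ∃ x r, r ∈ R ∧ (y = x * r * x⁻¹ ∨ y = x * r⁻¹ * x⁻¹) := by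
    simp only [Group.mem_conjugatesOfSet_iff, isConj_iff, Set.mem_union, Set.mem_inv]
    constructor
    · rintro ⟨r, hr | hr, x, rfl⟩
      · exact ⟨x, r, hr, .inl rfl⟩
      · exact ⟨x, r⁻¹, hr, .inr (by rw [inv_inv])⟩
    · rintro ⟨x, r, hr, rfl | rfl⟩
      · exact ⟨r, .inl hr, x, rfl⟩
      · exact ⟨r⁻¹, .inr (by rwa [inv_inv]), x, rfl⟩
  simp only [IsProdConjPM, Set.mem_pow, ← mem_conjugates]
  constructor
  · rintro ⟨f, hf, rfl⟩
    exact ⟨fun j ↦ ⟨f j, hf j⟩, rfl⟩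
  · rintro ⟨f, rfl⟩
    exact ⟨fun j ↦ f j, fun j ↦ (f j).2, rfl⟩

/-- `W` has area at most `L` over the relators `R`: it is a product of at most `L` conjugates of
elements of `R ∪ R⁻¹`. -/
def AreaLE (R : Set G) (L : ℕ) (W : G) : Prop :=
  ∃ k ≤ L, IsProdConjPM R k W

theorem areaLE_iff_exists_mem_pow :
    AreaLE R L W ↔ ∃ k ≤ L, W ∈ Group.conjugatesOfSet (R ∪ R⁻¹) ^ k := by
  simp only [AreaLE, isProdConjPM_iff_mem_pow]

namespace AreaLE

theorem mono (hW : AreaLE R L W) (hLM : L ≤ M) : AreaLE R M W :=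
  let ⟨k, hk, hW⟩ := hW
  ⟨k, hk.trans hLM, hW⟩

theorem one : AreaLE R 0 (1 : G) :=
  areaLE_iff_exists_mem_pow.2 ⟨0, le_rfl, by rw [pow_zero]; exact Set.one_mem_one⟩

theorem of_mem (hW : W ∈ R) : AreaLE R 1 W :=
  areaLE_iff_exists_mem_pow.2
    ⟨1, le_rfl, by rw [pow_one]; exact Group.subset_conjugatesOfSet (.inl hW)⟩

theorem mul (hV : AreaLE R L V) (hW : AreaLE R M W) : AreaLE R (L + M) (V * W) := by
  rw [areaLE_iff_exists_mem_pow] at *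
  obtain ⟨k, hk, hV⟩ := hV
  obtain ⟨l, hl, hW⟩ := hW
  exact ⟨k + l, add_le_add hk hl, by rw [pow_add]; exact Set.mul_mem_mul hV hW⟩

theorem conj (hW : AreaLE R L W) (g : G) : AreaLE R L (g * W * g⁻¹) := by
  rw [areaLE_iff_exists_mem_pow] at *
  obtain ⟨k, hk, hW⟩ := hW
  refine ⟨k, hk, ?_⟩
  have image_subset : MulAut.conj g '' Group.conjugatesOfSet (R ∪ R⁻¹) ⊆
      Group.conjugatesOfSet (R ∪ R⁻¹) :=
    Set.image_subset_iff.2 fun _ ↦ Group.conj_mem_conjugatesOfSet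
  apply Set.pow_subset_pow_left image_subset
  rw [← Set.image_pow]
  exact Set.mem_image_of_mem _ hW

theorem mul_left_div_trans (hgV : AreaLE R L (g / V)) (hVW : AreaLE R M (h * V / W)) :
    AreaLE R (L + M) (h * g / W) := by
  simpa [div_eq_mul_inv, mul_assoc] using (hgV.conj h).mul hVW

theorem inv (hW : AreaLE R L W) : AreaLE R L W⁻¹ := by
  rw [areaLE_iff_exists_mem_pow] at *
  obtain ⟨k, hk, hW⟩ := hW
  refine ⟨k, hk, ?_⟩
  have inv_subset : (Group.conjugatesOfSet (R ∪ R⁻¹))⁻¹ ⊆ Group.conjugatesOfSet (R ∪ R⁻¹) := by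
    intro y hy
    obtain ⟨r, hr, x, hx⟩ := by
      simpa only [Set.mem_inv, Group.mem_conjugatesOfSet_iff, isConj_iff] using hy
    refine Group.mem_conjugatesOfSet_iff.2 ⟨r⁻¹, ?_, isConj_iff.2 ⟨x, ?_⟩⟩
    · simpa [or_comm] using hr
    · rw [← conj_inv, hx, inv_inv]
  apply Set.pow_subset_pow_left inv_subset
  rwa [inv_pow, Set.inv_mem_inv]

theorem mem_normalClosure (hW : AreaLE R L W) : W ∈ Subgroup.normalClosure R := by
  obtain ⟨k, -, hW⟩ := areaLE_iff_exists_mem_pow.1 hW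
  have subset_normalClosure : R ∪ R⁻¹ ⊆ Subgroup.normalClosure R :=
    Set.union_subset Subgroup.subset_normalClosure fun _ hr ↦
      inv_mem_iff.1 (Subgroup.subset_normalClosure hr)
  exact Subgroup.pow_subset (Group.conjugatesOfSet_subset subset_normalClosure) hW

theorem commutator_swap (hgh : AreaLE R L ⁅g, h⁆) : AreaLE R L ⁅h, g⁆ := by
  simpa only [commutatorElement_inv] using hgh.inv

theorem commutator_inv_left (hgh : AreaLE R L ⁅g, h⁆) : AreaLE R L ⁅g⁻¹, h⁆ := by
  simpa only [commutatorElement_inv_left, inv_inv] using hgh.commutator_swap.conj g⁻¹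

end AreaLE

end Area

/-- The exponent sum of the generator `i` in a word, valued in `Multiplicative ℤ` so as to be a
group homomorphism. -/
def exponentSum {α : Type*} [DecidableEq α] (i : α) : FreeGroup α →* Multiplicative ℤ :=
  FreeGroup.lift (Pi.mulSingle i (ofAdd 1))

/-- The word `a ^ n * b ^ m` representing the image of `g` in the abelianization of `F(a, b)`. -/
def abelianForm (g : FreeGroup Bool) : FreeGroup Bool :=
  fa ^ toAdd (exponentSum true g) * fb ^ toAdd (exponentSum false g)

theorem abelianForm_eq_one_of_mem_commutator {g : FreeGroup Bool}
    (hg : g ∈ commutator (FreeGroup Bool)) : abelianForm g = 1 := by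
  have exponentSum_eq_one (i : Bool) : exponentSum i g = 1 :=
    Abelianization.commutator_subset_ker (exponentSum i) hg
  simp [abelianForm, exponentSum_eq_one]

theorem abelianForm_fa_zpow_mul (k : ℤ) (g : FreeGroup Bool) :
    abelianForm (fa ^ k * g) = fa ^ k * abelianForm g := by
  simp [abelianForm, exponentSum, fa, zpow_add, mul_assoc]

theorem fb_zpow_mul_abelianForm_div (k : ℤ) (g : FreeGroup Bool) :
    fb ^ k * abelianForm g / abelianForm (fb ^ k * g) =
      ⁅fb ^ k, fa ^ toAdd (exponentSum true g)⁆ := by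
  simp [abelianForm, exponentSum, fb, zpow_add, commutatorElement_def, div_eq_mul_inv, mul_assoc]

theorem areaLE_commutator_fa_zpow_fb (n : ℤ) : AreaLE Rab 1 ⁅fa ^ n, fb⁆ := by
  have areaLE_of_nat (i : ℕ) : AreaLE Rab 1 ⁅fa ^ i, fb⁆ := by
    rcases i.eq_zero_or_pos with rfl | hi
    · simpa using AreaLE.one.mono zero_le_one
    · exact .of_mem ⟨i, hi, rfl⟩
  obtain ⟨i, rfl | rfl⟩ := n.eq_nat_or_neg
  · simpa using areaLE_of_nat i
  · simpa using (areaLE_of_nat i).commutator_inv_left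

theorem areaLE_letter_mul_abelianForm_div (c : Bool × Bool) (g : FreeGroup Bool) :
    AreaLE Rab 1 (FreeGroup.mk [c] * abelianForm g / abelianForm (FreeGroup.mk [c] * g)) := by
  have areaLE_fa (k : ℤ) : AreaLE Rab 1 (fa ^ k * abelianForm g / abelianForm (fa ^ k * g)) := by
    rw [abelianForm_fa_zpow_mul, div_self']
    exact AreaLE.one.mono zero_le_one
  have areaLE_commutator : AreaLE Rab 1 ⁅fb, fa ^ toAdd (exponentSum true g)⁆ :=
    (areaLE_commutator_fa_zpow_fb _).commutator_swap
  rcases c with ⟨_ | _, _ | _⟩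
  · have mk_eq : FreeGroup.mk [(false, false)] = fb ^ (-1 : ℤ) := rfl
    rw [mk_eq, fb_zpow_mul_abelianForm_div, zpow_neg_one]
    exact areaLE_commutator.commutator_inv_left
  · have mk_eq : FreeGroup.mk [(false, true)] = fb ^ (1 : ℤ) := rfl
    rw [mk_eq, fb_zpow_mul_abelianForm_div, zpow_one]
    exact areaLE_commutator
  · exact areaLE_fa (-1)
  · exact areaLE_fa 1

theorem areaLE_mk_div_abelianForm (w : List (Bool × Bool)) :
    AreaLE Rab w.length (FreeGroup.mk w / abelianForm (FreeGroup.mk w)) := by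
  induction w with
  | nil => simpa [abelianForm, ← FreeGroup.one_eq_mk] using AreaLE.one
  | cons c w ih =>
    have mk_cons : FreeGroup.mk (c :: w) = FreeGroup.mk [c] * FreeGroup.mk w := rfl
    rw [mk_cons, List.length_cons]
    exact ih.mul_left_div_trans (areaLE_letter_mul_abelianForm_div c _)

theorem areaLE_norm_of_mem_commutator {W : FreeGroup Bool}
    (hW : W ∈ commutator (FreeGroup Bool)) : AreaLE Rab W.norm W := by
  simpa only [FreeGroup.norm, FreeGroup.mk_toWord, abelianForm_eq_one_of_mem_commutator hW, div_one]
    using areaLE_mk_div_abelianForm W.toWord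

theorem normalClosure_Rab_le_commutator :
    Subgroup.normalClosure Rab ≤ commutator (FreeGroup Bool) := by
  refine Subgroup.normalClosure_le_normal ?_
  rintro _ ⟨i, -, rfl⟩
  exact Subgroup.commutator_mem_commutator (Subgroup.mem_top _) (Subgroup.mem_top _)

/-- the presentation `⟨a, b ∥ aⁱba⁻ⁱb⁻¹ (i ≥ 1)⟩` defines the
free abelian group of rank 2 and its Dehn 2-function is bounded by a linear
function. -/
theorem abelianized_example :
    Subgroup.normalClosure Rab = commutator (FreeGroup Bool) ∧
    ∃ C : ℝ, 0 < C ∧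
      ∀ x : ℕ, ∀ W ∈ commutator (FreeGroup Bool), FreeGroup.norm W ≤ x →
        ∃ L : ℕ, (L : ℝ) ≤ C * (x : ℝ) ∧ IsProdConjPM Rab L W := by
  have commutator_le : commutator (FreeGroup Bool) ≤ Subgroup.normalClosure Rab :=
    fun _ hW ↦ (areaLE_norm_of_mem_commutator hW).mem_normalClosure
  refine ⟨normalClosure_Rab_le_commutator.antisymm commutator_le, 1, one_pos, ?_⟩
  intro x W hW hWx
  obtain ⟨L, hLx, hL⟩ := (areaLE_norm_of_mem_commutator hW).mono hWx
  exact ⟨L, by rw [one_mul]; exact_mod_cast hLx, hL⟩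
end
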